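/- Let 1 ≤ k ≤ n and let x, l, u ∈ ℝ^n satisfy l_i ≤ x_i ≤ u_i for all i. Set L = Q_k(l), and let U ∈ ℝ satisfy U > L and U ≥ Q_k(u). Then for every subset W of {1,…,n} with |W| ≥ k, Q_k(x) ≥ L + ((U − L)/(|W| − k + 1)) · ( Σ_{i ∈ W} (x_i − L)/(max(U, u_i) − L) − k + 1 ). -/

import Mathlib

/-- `Qk k x` is the `k`-th largest coordinate of `x : Fin n → ℝ` (meaningful for `1 ≤ k ≤ n`):
`Tuple.sort x` sorts the coordinates in nondecreasing order, so the `k`-th largest one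
sits at (0-indexed) position `n - k`. -/
noncomputable def Qk {n : ℕ} (k : ℕ) (x : Fin n → ℝ) : ℝ :=
  if h : n - k < n then x (Tuple.sort x ⟨n - k, h⟩) else 0

/-!
Let `q = Qk k x` and measure each coordinate by the ratio `(x i - L) / (M i - L)`, where `M i` is
at least `U` and `x i`. Every ratio is at most `1`, and it is at most `t = (q - L) / (U - L)`
unless `q < x i`, which happens for at most `k - 1` indices. Giving `k - 1` of the ratios the bound
`1` and the others the bound `t`, the ratios over `W` add up to at most
`(k - 1) + (|W| - k + 1) * t`; solving for `q` gives the theorem with `M i = max U (u i)`.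
-/

open Finset

theorem sum_le_nsmul_add_nsmul_of_card_filter_lt_le {ι M : Type*} [AddCommMonoid M] [LinearOrder M]
    [IsOrderedAddMonoid M] {s : Finset ι} {f : ι → M} {a b : M} {m : ℕ} (hb : ∀ i ∈ s, f i ≤ b)
    (hcard : #{i ∈ s | a < f i} ≤ m) (hm : m ≤ #s) :
    ∑ i ∈ s, f i ≤ m • b + (#s - m) • a := by
  classical
  obtain ⟨t, hft, hts, rfl⟩ := exists_subsuperset_card_eq (filter_subset _ s) hcard hm
  have ha : ∀ i ∈ s \ t, f i ≤ a := fun i hi ↦ by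
    obtain ⟨his, hit⟩ := mem_sdiff.1 hi
    exact not_lt.1 fun hlt ↦ hit (hft (mem_filter.2 ⟨his, hlt⟩))
  rw [← sum_sdiff hts, add_comm, ← card_sdiff_of_subset hts]
  exact add_le_add (sum_le_card_nsmul _ _ _ fun i hi ↦ hb i (hts hi)) (sum_le_card_nsmul _ _ _ ha)

theorem sum_sub_div_sub_le {ι 𝕜 : Type*} [Field 𝕜] [LinearOrder 𝕜] [IsStrictOrderedRing 𝕜]
    {s : Finset ι} {x M : ι → 𝕜} {L U q : 𝕜} {m : ℕ} (hLq : L ≤ q) (hLU : L < U)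
    (hUM : ∀ i ∈ s, U ≤ M i) (hxM : ∀ i ∈ s, x i ≤ M i)
    (hcard : #{i ∈ s | q < x i} ≤ m) (hm : m ≤ #s) :
    ∑ i ∈ s, (x i - L) / (M i - L) ≤ m + (#s - m) * ((q - L) / (U - L)) := by
  have ratio_le_one : ∀ i ∈ s, (x i - L) / (M i - L) ≤ 1 := fun i hi ↦
    div_le_one_of_le₀ (sub_le_sub_right (hxM i hi) L) (sub_nonneg.2 (hLU.le.trans (hUM i hi)))
  have ratio_le : ∀ i ∈ s, x i ≤ q → (x i - L) / (M i - L) ≤ (q - L) / (U - L) := fun i hi hxq ↦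
    div_le_div₀ (sub_nonneg.2 hLq) (sub_le_sub_right hxq L) (sub_pos.2 hLU)
      (sub_le_sub_right (hUM i hi) L)
  have hcard_ratio : #{i ∈ s | (q - L) / (U - L) < (x i - L) / (M i - L)} ≤ m :=
    (card_le_card <| monotone_filter_right s fun i hi ↦
      lt_imp_lt_of_le_imp_le (ratio_le i hi)).trans hcard
  simpa [Nat.cast_sub hm] using
    sum_le_nsmul_add_nsmul_of_card_filter_lt_le ratio_le_one hcard_ratio hm

section Qk

variable {n k : ℕ} {x y : Fin n → ℝ}

theorem Qk_le_iff_card_lt (hk : 1 ≤ k) (hkn : k ≤ n) {a : ℝ} :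
    Qk k x ≤ a ↔ #{i | a < x i} < k := by
  have hpos : n - k < n := by omega
  have hsorted : #{i | (x ∘ Tuple.sort x) i ≤ a} = #{i | x i ≤ a} :=
    card_equiv (Tuple.sort x) (by simp)
  have hcompl : #{i | x i ≤ a} + #{i | a < x i} = n := by
    simpa using card_filter_add_card_filter_not (s := univ) (fun i ↦ x i ≤ a)
  have hle : Qk k x ≤ a ↔ n - k < #{i | x i ≤ a} := by
    rw [Qk, dif_pos hpos, ← hsorted]
    exact (Tuple.lt_card_le_iff_apply_le_of_monotone (j := ⟨n - k, hpos⟩)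
      (Tuple.monotone_sort x)).symm
  rw [hle]
  omega

theorem Qk_mono (hk : 1 ≤ k) (hkn : k ≤ n) (hxy : x ≤ y) : Qk k x ≤ Qk k y := by
  have hy : #{i | Qk k y < y i} < k := (Qk_le_iff_card_lt hk hkn).1 le_rfl
  refine (Qk_le_iff_card_lt hk hkn).2 ((card_le_card ?_).trans_lt hy)
  exact monotone_filter_right _ fun i _ hi ↦ hi.trans_le (hxy i)

end Qk

theorem asymmetric_lower_bound_general {n k : ℕ} (hk : 1 ≤ k) {x M : Fin n → ℝ} {L U : ℝ}
    {W : Finset (Fin n)} (hW : k ≤ #W) (hL : L ≤ Qk k x) (hLU : L < U)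
    (hUM : ∀ i ∈ W, U ≤ M i) (hxM : ∀ i ∈ W, x i ≤ M i) :
    L + (U - L) / (#W - k + 1) * (∑ i ∈ W, (x i - L) / (M i - L) - k + 1) ≤ Qk k x := by
  have hcard : #{i ∈ W | Qk k x < x i} < k :=
    (card_le_card (filter_subset_filter _ (subset_univ W))).trans_lt
      ((Qk_le_iff_card_lt hk (hW.trans (card_finset_fin_le W))).1 le_rfl)
  have hsum := sum_sub_div_sub_le hL hLU hUM hxM (Nat.le_sub_one_of_lt hcard) (by omega)
  rw [Nat.cast_sub hk, Nat.cast_one] at hsum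
  have hd : (0 : ℝ) < #W - k + 1 := by
    have : (k : ℝ) ≤ #W := mod_cast hW
    linarith
  have hUL : 0 < U - L := sub_pos.2 hLU
  calc L + (U - L) / (#W - k + 1) * (∑ i ∈ W, (x i - L) / (M i - L) - k + 1)
      ≤ L + (U - L) / (#W - k + 1) * ((#W - k + 1) * ((Qk k x - L) / (U - L))) := by
        gcongr
        linarith
    _ = Qk k x := by
        field_simp
        ring

theorem asymmetric_lower_bound (n k : ℕ) (hk : 1 ≤ k) (hkn : k ≤ n)
    (x l u : Fin n → ℝ) (hlx : ∀ i, l i ≤ x i) (hxu : ∀ i, x i ≤ u i)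
    (U : ℝ) (hLU : Qk k l < U) (hUu : Qk k u ≤ U)
    (W : Finset (Fin n)) (hW : k ≤ W.card) :
    Qk k x ≥ Qk k l + ((U - Qk k l) / ((W.card : ℝ) - k + 1)) *
      ((∑ i ∈ W, (x i - Qk k l) / (max U (u i) - Qk k l)) - k + 1) :=
  asymmetric_lower_bound_general hk hW (Qk_mono hk hkn hlx) hLU (fun _ _ ↦ le_max_left _ _)
    fun i _ ↦ (hxu i).trans (le_max_right _ _)
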